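/- arXiv:2512.01623 — 5 statements merged into one kernel-verified Lean document; each statement's English description precedes it below -/
import Mathlib

section
/- Suppose p is a ρ-squared-distance-bound function and there exists L > 0 such that for every x ∈ C the map y ↦ f(x, y) is L-Lipschitz on U(x). Let ε₁ > 0 and set γ* := L²ρ/(4ε₁). Then for every γ ≥ γ*, any global solution (x*, y*) of BP is an ε₁-global-minimum of BP_{γp}; that is, x* ∈ C, y* ∈ U(x*), and f(x*, y*) + γ·p(x*, y*) ≤ f(x, y) + γ·p(x, y) + ε₁ for all x ∈ C and y ∈ U(x). -/
open Metric Set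

/-- Global-solution relation between the bilevel problem `BP` and its
penalized version `BP_{γp}` (Theorem "General Relation on Global Solutions", first part). -/
theorem penalized_bilevel_global_solutions
    {dx dy : ℕ}
    (C : Set (EuclideanSpace ℝ (Fin dx)))
    (U S : EuclideanSpace ℝ (Fin dx) → Set (EuclideanSpace ℝ (Fin dy)))
    (f h p : EuclideanSpace ℝ (Fin dx) → EuclideanSpace ℝ (Fin dy) → ℝ)
    (hCne : C.Nonempty) (hCcl : IsClosed C)
    (hUne : ∀ x ∈ C, (U x).Nonempty) (hUcl : ∀ x ∈ C, IsClosed (U x))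
    -- the lower-level solution set is the argmin of `h(x, ·)` over `U x`
    (hS : ∀ x ∈ C, S x = {y | y ∈ U x ∧ ∀ y' ∈ U x, h x y ≤ h x y'})
    (hSne : ∀ x ∈ C, (S x).Nonempty) (hScl : ∀ x ∈ C, IsClosed (S x))
    -- `p` is a ρ-squared-distance-bound function
    (ρ : ℝ) (hρ : 0 < ρ)
    (hp : ∀ x ∈ C, ∀ y ∈ U x,
      0 ≤ p x y ∧ (infDist y (S x)) ^ 2 ≤ ρ * p x y ∧
        (p x y = 0 ↔ infDist y (S x) = 0))
    -- `f(x, ·)` is L-Lipschitz on `U x` for every `x ∈ C`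
    (L : ℝ) (hL : 0 < L)
    (hLip : ∀ x ∈ C, LipschitzOnWith (Real.toNNReal L) (f x) (U x))
    (ε₁ : ℝ) (hε₁ : 0 < ε₁)
    (γ : ℝ) (hγ : L ^ 2 * ρ / (4 * ε₁) ≤ γ)
    -- `(xs, ys)` is a global solution of `BP`
    (xs : EuclideanSpace ℝ (Fin dx)) (ys : EuclideanSpace ℝ (Fin dy))
    (hxs : xs ∈ C) (hys : ys ∈ S xs)
    (hglob : ∀ x ∈ C, ∀ y ∈ S x, f xs ys ≤ f x y) :
    -- then `(xs, ys)` is an ε₁-global-minimum of `BP_{γp}`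
    ys ∈ U xs ∧
      ∀ x ∈ C, ∀ y ∈ U x,
        f xs ys + γ * p xs ys ≤ f x y + γ * p x y + ε₁ := by
  have hSU : ∀ x ∈ C, ∀ y ∈ S x, y ∈ U x := by
    intro x hx y hy
    rw [hS x hx] at hy
    exact hy.1
  have hysU := hSU xs hxs ys hys
  refine ⟨hysU, ?_⟩
  intro x hx y hy
  have hp0 : p xs ys = 0 := (hp xs hxs ys hysU).2.2.2 (infDist_zero_of_mem hys)
  obtain ⟨z, hz, hdz⟩ := (hScl x hx).exists_infDist_eq_dist (hSne x hx) y
  obtain ⟨hpn, hpd, -⟩ := hp x hx y hy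
  have h1 := hglob x hx z hz
  have h2 := (hLip x hx).dist_le_mul z (hSU x hx z hz) y hy
  rw [Real.coe_toNNReal L hL.le, dist_comm z y, ← hdz, Real.dist_eq] at h2
  have h3 := (abs_le.1 h2).2
  generalize infDist y (S x) = d at *
  have h4 : L ^ 2 * ρ / (4 * ε₁) * p x y ≤ γ * p x y :=
    mul_le_mul_of_nonneg_right hγ hpn
  have h5 : L * d - ε₁ ≤ L ^ 2 * ρ / (4 * ε₁) * p x y := by
    rw [div_mul_eq_mul_div, le_div_iff₀ (by positivity)]
    have h6 : L ^ 2 * d ^ 2 ≤ L ^ 2 * (ρ * p x y) :=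
      mul_le_mul_of_nonneg_left hpd (by positivity)
    nlinarith [sq_nonneg (L * d - 2 * ε₁)]
  rw [hp0]
  linarith
end

section
/- Suppose p is a ρ-squared-distance-bound function and p(x, ·) is continuous for every x ∈ C. Let γ > 0 and suppose (x_γ, y_γ) is a local solution of BP_{γp} on the ball of radius r > 0: x_γ ∈ C, y_γ ∈ U(x_γ), and f(x_γ, y_γ) + γ·p(x_γ, y_γ) ≤ f(x, y) + γ·p(x, y) for all x ∈ C, y ∈ U(x) with ‖(x, y) − (x_γ, y_γ)‖ ≤ r. Suppose y ↦ f(x_γ, y) is L-Lipschitz on the ball of radius r around y_γ, and that there exist ε ≥ 0 and ȳ ∈ U(x_γ) with ‖ȳ − y_γ‖ ≤ r and p(x_γ, ȳ) ≤ ε. Then, setting ε̄_γ := L²ρ/γ² + 2ε, there exists ε_γ ∈ [0, ε̄_γ] such that (x_γ, y_γ) is a local solution of BP_{ε_γ}: p(x_γ, y_γ) ≤ ε_γ and there exists r' > 0 with f(x_γ, y_γ) ≤ f(x, y) for all x ∈ C, y ∈ U(x) satisfying p(x, y) ≤ ε_γ and ‖(x, y) − (x_γ, y_γ)‖ ≤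 r'. -/
open Metric Set

/-- Local-solution relation (case (i)): a local solution of the penalized
problem `BP_{γp}` is a local solution of the approximate problem `BP_{ε_γ}` with
`ε_γ ≤ L²ρ/γ² + 2ε`, given a nearby point `ȳ ∈ U(x_γ)` with small penalty value. -/
theorem penalized_bilevel_local_solutions_case_i
    {dx dy : ℕ}
    (C : Set (EuclideanSpace ℝ (Fin dx)))
    (U S : EuclideanSpace ℝ (Fin dx) → Set (EuclideanSpace ℝ (Fin dy)))
    (f h p : EuclideanSpace ℝ (Fin dx) → EuclideanSpace ℝ (Fin dy) → ℝ)
    (hCne : C.Nonempty) (hCcl : IsClosed C)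
    (hUne : ∀ x ∈ C, (U x).Nonempty) (hUcl : ∀ x ∈ C, IsClosed (U x))
    -- the lower-level solution set is the argmin of `h(x, ·)` over `U x`
    (hS : ∀ x ∈ C, S x = {y | y ∈ U x ∧ ∀ y' ∈ U x, h x y ≤ h x y'})
    (hSne : ∀ x ∈ C, (S x).Nonempty) (hScl : ∀ x ∈ C, IsClosed (S x))
    -- `p` is a ρ-squared-distance-bound function with `p(x, ·)` continuous
    (ρ : ℝ) (hρ : 0 < ρ)
    (hp : ∀ x ∈ C, ∀ y ∈ U x,
      0 ≤ p x y ∧ (infDist y (S x)) ^ 2 ≤ ρ * p x y ∧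
        (p x y = 0 ↔ infDist y (S x) = 0))
    (hpc : ∀ x ∈ C, Continuous (p x))
    (γ : ℝ) (hγ : 0 < γ)
    (r : ℝ) (hr : 0 < r)
    -- `(xγ, yγ)` is a local solution of `BP_{γp}` on the ball of radius `r`
    (xγ : EuclideanSpace ℝ (Fin dx)) (yγ : EuclideanSpace ℝ (Fin dy))
    (hxγ : xγ ∈ C) (hyγ : yγ ∈ U xγ)
    (hloc : ∀ x ∈ C, ∀ y ∈ U x,
      dist ((x, y) : EuclideanSpace ℝ (Fin dx) × EuclideanSpace ℝ (Fin dy)) (xγ, yγ) ≤ r →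
        f xγ yγ + γ * p xγ yγ ≤ f x y + γ * p x y)
    -- `f(xγ, ·)` is L-Lipschitz on the ball of radius `r` around `yγ`
    (L : ℝ) (hL : 0 < L)
    (hLip : LipschitzOnWith (Real.toNNReal L) (f xγ) (closedBall yγ r))
    -- case (i): there is `ȳ ∈ U(xγ)` near `yγ` with small penalty value
    (ε : ℝ) (hε : 0 ≤ ε)
    (ybar : EuclideanSpace ℝ (Fin dy)) (hybarU : ybar ∈ U xγ)
    (hybar_close : ‖ybar - yγ‖ ≤ r) (hybar_p : p xγ ybar ≤ ε) :
    -- then `(xγ, yγ)` is a local solution of `BP_{ε_γ}` with `ε_γ ≤ L²ρ/γ² + 2ε`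
    ∃ εγ : ℝ, 0 ≤ εγ ∧ εγ ≤ L ^ 2 * ρ / γ ^ 2 + 2 * ε ∧
      p xγ yγ ≤ εγ ∧
      ∃ r' : ℝ, 0 < r' ∧
        ∀ x ∈ C, ∀ y ∈ U x, p x y ≤ εγ →
          dist ((x, y) : EuclideanSpace ℝ (Fin dx) × EuclideanSpace ℝ (Fin dy)) (xγ, yγ) ≤ r' →
            f xγ yγ ≤ f x y := by
  obtain ⟨hp0, hpd, -⟩ := hp xγ hxγ yγ hyγ
  refine ⟨p xγ yγ, hp0, ?_, le_rfl, r, hr, ?_⟩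
  · -- project `yγ` onto the closed set of points of `U xγ` with penalty at most `ε`
    have hTcl : IsClosed (U xγ ∩ {y | p xγ y ≤ ε}) :=
      (hUcl xγ hxγ).inter (isClosed_le (hpc xγ hxγ) continuous_const)
    have hTne : (U xγ ∩ {y | p xγ y ≤ ε}).Nonempty := ⟨ybar, hybarU, hybar_p⟩
    obtain ⟨z, ⟨hzU, hzp⟩, hz⟩ := hTcl.exists_infDist_eq_dist hTne yγ
    have hzp' : p xγ z ≤ ε := hzp
    have hST : S xγ ⊆ U xγ ∩ {y | p xγ y ≤ ε} := by
      intro y hy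
      have hyU : y ∈ U xγ := by
        have hy' := hy
        rw [hS xγ hxγ] at hy'
        exact hy'.1
      refine ⟨hyU, ?_⟩
      have h0 := (hp xγ hxγ y hyU).2.2.2 (infDist_zero_of_mem hy)
      simp only [Set.mem_ofPred_eq, h0, hε]
    have hd1 : dist yγ z ≤ infDist yγ (S xγ) := by
      rw [← hz]
      exact infDist_le_infDist_of_subset hST (hSne xγ hxγ)
    have hd2 : dist yγ z ≤ r := by
      rw [← hz]
      have hmem : ybar ∈ U xγ ∩ {y | p xγ y ≤ ε} := ⟨hybarU, hybar_p⟩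
      refine (infDist_le_dist_of_mem hmem).trans ?_
      rw [dist_comm, dist_eq_norm]
      exact hybar_close
    have hopt := hloc xγ hxγ z hzU (by
      rw [Prod.dist_eq]
      simp only [dist_self]
      rw [dist_comm z yγ]
      exact max_le hr.le hd2)
    have hl := hLip.dist_le_mul z (by rw [mem_closedBall, dist_comm]; exact hd2) yγ
      (mem_closedBall_self hr.le)
    rw [Real.coe_toNNReal L hL.le, dist_comm z yγ, Real.dist_eq] at hl
    have hl' := (le_abs_self _).trans hl
    have hsq : dist yγ z ^ 2 ≤ ρ * p xγ yγ :=
      (pow_le_pow_left₀ dist_nonneg hd1 2).trans hpd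
    have hkey : γ * p xγ yγ ≤ L * dist yγ z + γ * ε := by
      have := mul_le_mul_of_nonneg_left hzp' hγ.le
      linarith
    generalize dist yγ z = d at *
    generalize p xγ yγ = q at *
    have hfin : (q - 2 * ε) * γ ^ 2 ≤ L ^ 2 * ρ := by
      have h1 : 0 ≤ (γ * d - L * ρ) ^ 2 := sq_nonneg _
      have h2 : γ ^ 2 * d ^ 2 ≤ γ ^ 2 * (ρ * q) := mul_le_mul_of_nonneg_left hsq (sq_nonneg _)
      have h3 := mul_le_mul_of_nonneg_left hkey (by positivity : 0 ≤ 2 * γ * ρ)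
      have h4 : ρ * ((q - 2 * ε) * γ ^ 2) ≤ ρ * (L ^ 2 * ρ) := by nlinarith
      exact le_of_mul_le_mul_left h4 hρ
    have := (le_div_iff₀ (by positivity : 0 < γ ^ 2)).2 hfin
    linarith
  · intro x hx y hy hpy hd
    have h1 := hloc x hx y hy hd
    have h2 := mul_le_mul_of_nonneg_left hpy hγ.le
    linarith
end

section
/- Suppose p is a ρ-squared-distance-bound function and p(x, ·) is continuous for every x ∈ C. Let γ > 0 and suppose (x_γ, y_γ) is a local solution of BP_{γp} on the ball of radius r > 0: x_γ ∈ C, y_γ ∈ U(x_γ), and f(x_γ, y_γ) + γ·p(x_γ, y_γ) ≤ f(x, y) + γ·p(x, y) for all x ∈ C, y ∈ U(x) with ‖(x, y) − (x_γ, y_γ)‖ ≤ r. Suppose y ↦ f(x_γ, y) is L-Lipschitz on the ball of radius r around y_γ, the set U(x_γ) is convex, and the function y ↦ p(x_γ, y) is convex. Then, setting ε̄_γ := L²ρ/γ², there exists ε_γ ∈ [0, ε̄_γ] such that (x_γ, y_γ) is a local solution of BP_{ε_γ}: p(x_γ, y_γ) ≤ ε_γ and there exists r' > 0 with f(x_γ,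 y_γ) ≤ f(x, y) for all x ∈ C, y ∈ U(x) satisfying p(x, y) ≤ ε_γ and ‖(x, y) − (x_γ, y_γ)‖ ≤ r'. -/
open Metric Set

/-- Local-solution relation (case (ii)): a local solution of the penalized
problem `BP_{γp}` is a local solution of the approximate problem `BP_{ε_γ}` with
`ε_γ ≤ L²ρ/γ²`, given that `U(x_γ)` is convex and `p(x_γ, ·)` is convex. -/
theorem penalized_bilevel_local_solutions_case_ii
    {dx dy : ℕ}
    (C : Set (EuclideanSpace ℝ (Fin dx)))
    (U S : EuclideanSpace ℝ (Fin dx) → Set (EuclideanSpace ℝ (Fin dy)))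
    (f h p : EuclideanSpace ℝ (Fin dx) → EuclideanSpace ℝ (Fin dy) → ℝ)
    (hCne : C.Nonempty) (hCcl : IsClosed C)
    (hUne : ∀ x ∈ C, (U x).Nonempty) (hUcl : ∀ x ∈ C, IsClosed (U x))
    -- the lower-level solution set is the argmin of `h(x, ·)` over `U x`
    (hS : ∀ x ∈ C, S x = {y | y ∈ U x ∧ ∀ y' ∈ U x, h x y ≤ h x y'})
    (hSne : ∀ x ∈ C, (S x).Nonempty) (hScl : ∀ x ∈ C, IsClosed (S x))
    -- `p` is a ρ-squared-distance-bound function with `p(x, ·)` continuous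
    (ρ : ℝ) (hρ : 0 < ρ)
    (hp : ∀ x ∈ C, ∀ y ∈ U x,
      0 ≤ p x y ∧ (infDist y (S x)) ^ 2 ≤ ρ * p x y ∧
        (p x y = 0 ↔ infDist y (S x) = 0))
    (hpc : ∀ x ∈ C, Continuous (p x))
    (γ : ℝ) (hγ : 0 < γ)
    (r : ℝ) (hr : 0 < r)
    -- `(xγ, yγ)` is a local solution of `BP_{γp}` on the ball of radius `r`
    (xγ : EuclideanSpace ℝ (Fin dx)) (yγ : EuclideanSpace ℝ (Fin dy))
    (hxγ : xγ ∈ C) (hyγ : yγ ∈ U xγ)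
    (hloc : ∀ x ∈ C, ∀ y ∈ U x,
      dist ((x, y) : EuclideanSpace ℝ (Fin dx) × EuclideanSpace ℝ (Fin dy)) (xγ, yγ) ≤ r →
        f xγ yγ + γ * p xγ yγ ≤ f x y + γ * p x y)
    -- `f(xγ, ·)` is L-Lipschitz on the ball of radius `r` around `yγ`
    (L : ℝ) (hL : 0 < L)
    (hLip : LipschitzOnWith (Real.toNNReal L) (f xγ) (closedBall yγ r))
    -- case (ii): `U(xγ)` is convex and `p(xγ, ·)` is convex
    (hUconv : Convex ℝ (U xγ))
    (hpconv : ConvexOn ℝ (U xγ) (p xγ)) :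
    -- then `(xγ, yγ)` is a local solution of `BP_{ε_γ}` with `ε_γ ≤ L²ρ/γ²`
    ∃ εγ : ℝ, 0 ≤ εγ ∧ εγ ≤ L ^ 2 * ρ / γ ^ 2 ∧
      p xγ yγ ≤ εγ ∧
      ∃ r' : ℝ, 0 < r' ∧
        ∀ x ∈ C, ∀ y ∈ U x, p x y ≤ εγ →
          dist ((x, y) : EuclideanSpace ℝ (Fin dx) × EuclideanSpace ℝ (Fin dy)) (xγ, yγ) ≤ r' →
            f xγ yγ ≤ f x y := by
  obtain ⟨hP0, hPd, -⟩ := hp xγ hxγ yγ hyγ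
  refine ⟨p xγ yγ, hP0, ?_, le_rfl, r, hr, ?_⟩
  swap
  · intro x hx y hy hpy hd
    have h1 := hloc x hx y hy hd
    have h2 := mul_le_mul_of_nonneg_left hpy hγ.le
    linarith
  obtain ⟨z, hz, hzd⟩ := (hScl xγ hxγ).exists_infDist_eq_dist (hSne xγ hxγ) yγ
  have hzU : z ∈ U xγ := by
    have hz' := hz
    rw [hS xγ hxγ] at hz'
    exact hz'.1
  have hpz : p xγ z = 0 := (hp xγ hxγ z hzU).2.2.2 (infDist_zero_of_mem hz)
  rw [hzd] at hPd
  have hd0 : 0 ≤ dist yγ z := dist_nonneg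
  set d := dist yγ z with hd
  set P := p xγ yγ with hP
  have hrd : 0 < r + d := by linarith
  obtain ⟨t, ht⟩ : ∃ t, t = r / (r + d) := ⟨_, rfl⟩
  have ht0 : 0 < t := by rw [ht]; positivity
  have ht1 : t ≤ 1 := by rw [ht, div_le_one hrd]; linarith
  have htr : t * (r + d) = r := by rw [ht]; field_simp
  have htd : t * d ≤ r := by nlinarith
  have hwU : (1 - t) • yγ + t • z ∈ U xγ :=
    hUconv hyγ hzU (by linarith) ht0.le (by ring)
  have hpw := hpconv.2 hyγ hzU (by linarith : 0 ≤ 1 - t) ht0.le (by ring)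
  have hdw : dist ((1 - t) • yγ + t • z) yγ = t * d := by
    have e : (1 - t) • yγ + t • z - yγ = t • (z - yγ) := by module
    rw [dist_eq_norm, e, norm_smul, Real.norm_of_nonneg ht0.le, hd, dist_comm, dist_eq_norm]
  generalize (1 - t) • yγ + t • z = w at hwU hpw hdw
  have hl := hloc xγ hxγ w hwU (by
    rw [Prod.dist_eq, dist_self, hdw]
    exact max_le hr.le htd)
  have hf := hLip.dist_le_mul w (by rw [mem_closedBall, hdw]; exact htd) yγ
    (mem_closedBall_self hr.le)
  rw [Real.coe_toNNReal L hL.le, hdw, Real.dist_eq] at hf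
  have hf' := (le_abs_self _).trans hf
  rw [hpz, ← hP] at hpw
  simp only [smul_eq_mul, mul_zero, add_zero] at hpw
  have hk : t * (γ * P) ≤ t * (L * d) := by
    have := mul_le_mul_of_nonneg_left hpw hγ.le
    linarith
  have hk' : γ * P ≤ L * d := le_of_mul_le_mul_left hk ht0
  rw [le_div_iff₀ (by positivity)]
  rcases hP0.eq_or_lt with h0 | h0
  · rw [← h0]; simp; positivity
  · have hsq : (γ * P) ^ 2 ≤ (L * d) ^ 2 := pow_le_pow_left₀ (by positivity) hk' 2
    have h3 : L ^ 2 * d ^ 2 ≤ L ^ 2 * (ρ * P) := mul_le_mul_of_nonneg_left hPd (by positivity)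
    refine le_of_mul_le_mul_left ?_ h0
    linarith
end

section
/- Let (Ω, P) be a finite probability space and let g : [0,1] → [0,1] be a nondecreasing concave function with g(0) = 0. Then the distortion risk measure ρ_g is subadditive: for all nonnegative random variables Z₁ and Z₂ on Ω, ρ_g(Z₁ + Z₂) ≤ ρ_g(Z₁) + ρ_g(Z₂). -/
open MeasureTheory

namespace DistSub

lemma conc_incr (g : ℝ → ℝ) (hg : ConcaveOn ℝ (Set.Icc 0 1) g) {s t d : ℝ}
    (hs : 0 ≤ s) (hst : s ≤ t) (hd : 0 ≤ d) (h1 : t + d ≤ 1) :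
    g (t + d) - g t ≤ g (s + d) - g s := by
  rcases (show 0 ≤ t + d - s by linarith).eq_or_lt with h | h
  · have h1 : t = s := by linarith
    have h2 : d = 0 := by linarith
    simp [h1, h2]
  · have ha : 0 ≤ d / (t + d - s) := by positivity
    have hb : 0 ≤ (t - s) / (t + d - s) := div_nonneg (by linarith) h.le
    have hab : d / (t + d - s) + (t - s) / (t + d - s) = 1 := by field_simp; ring
    have hsm : s ∈ Set.Icc (0:ℝ) 1 := ⟨hs, by linarith⟩
    have htm : t + d ∈ Set.Icc (0:ℝ) 1 := ⟨by linarith, h1⟩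
    have e1 := hg.2 hsm htm ha hb hab
    have e2 := hg.2 hsm htm hb ha (by linarith)
    simp only [smul_eq_mul] at e1 e2
    have k1 : d / (t + d - s) * s + (t - s) / (t + d - s) * (t + d) = t := by
      field_simp; ring
    have k2 : (t - s) / (t + d - s) * s + d / (t + d - s) * (t + d) = s + d := by
      field_simp; ring
    rw [k1] at e1
    rw [k2] at e2
    generalize d / (t + d - s) = a at *
    generalize (t - s) / (t + d - s) = b at *
    have : b = 1 - a := by linarith
    subst this
    nlinarith

section order
variable {Ω : Type*} [Fintype Ω] [LinearOrder Ω]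

/-- Greedy weights. -/
noncomputable def wt (g : ℝ → ℝ) (p : Ω → ℝ) (a : Ω) : ℝ :=
  g (∑ b ∈ Finset.univ.filter (· < a), p b + p a) - g (∑ b ∈ Finset.univ.filter (· < a), p b)

lemma wt_le (g : ℝ → ℝ) (hg : ConcaveOn ℝ (Set.Icc 0 1) g) (hg0 : g 0 = 0)
    (p : Ω → ℝ) (hp : ∀ a, 0 ≤ p a) (hp1 : ∑ a, p a = 1) (A : Finset Ω) :
    ∑ a ∈ A, wt g p a ≤ g (∑ a ∈ A, p a) := by
  induction A using Finset.induction_on_max with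
  | empty => simp [hg0]
  | insert a A hA ih =>
    have hn : a ∉ A := fun h => lt_irrefl _ (hA a h)
    rw [Finset.sum_insert hn, Finset.sum_insert hn]
    have := conc_incr g hg (s := ∑ b ∈ A, p b) (t := ∑ b ∈ Finset.univ.filter (· < a), p b)
      (d := p a) (Finset.sum_nonneg fun _ _ => hp _)
      (Finset.sum_le_sum_of_subset_of_nonneg (fun x hx => by simpa using hA x hx)
        (fun _ _ _ => hp _)) (hp a) (by
          rw [add_comm, ← Finset.sum_insert (by simp), ← hp1]
          exact Finset.sum_le_sum_of_subset_of_nonneg (Finset.subset_univ _) (fun _ _ _ => hp _))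
    rw [add_comm (p a)]
    unfold wt at *
    linarith

lemma wt_eq (g : ℝ → ℝ) (hg0 : g 0 = 0) (p : Ω → ℝ) (A : Finset Ω)
    (hl : ∀ a ∈ A, ∀ b, b < a → b ∈ A) :
    ∑ a ∈ A, wt g p a = g (∑ a ∈ A, p a) := by
  induction A using Finset.induction_on_max with
  | empty => simp [hg0]
  | insert a A hA ih =>
    have hn : a ∉ A := fun h => lt_irrefl _ (hA a h)
    have hAe : A = Finset.univ.filter (· < a) := by
      ext x
      simp only [Finset.mem_filter, Finset.mem_univ, true_and]
      refine ⟨hA x, fun h => ?_⟩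
      have := hl a (by simp) x h
      rcases Finset.mem_insert.1 this with h' | h'
      · exact absurd h' h.ne
      · exact h'
    have ih' := ih (fun b hb c hc => by
      rw [hAe] at hb ⊢
      simp at hb ⊢
      exact hc.trans hb)
    rw [Finset.sum_insert hn, Finset.sum_insert hn, ih', add_comm (p a), wt, ← hAe]
    ring

end order

section integ
variable {Ω : Type*} [Fintype Ω]

lemma ind_integrable (c M : ℝ) :
    Integrable (fun z : ℝ => if z < M then c else 0) (volume.restrict (Set.Ioi 0)) := by
  have : (fun z : ℝ => if z < M then c else 0) = (Set.Iio M).indicator (fun _ => c) := by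
    ext z; simp [Set.indicator_apply]
  rw [this, integrable_indicator_iff measurableSet_Iio, IntegrableOn,
    Measure.restrict_restrict measurableSet_Iio]
  refine integrableOn_const ?_
  rw [Set.Iio_inter_Ioi]
  simp

lemma ind_integral (c M : ℝ) (hM : 0 ≤ M) :
    ∫ z in Set.Ioi (0:ℝ), (if z < M then c else 0) = c * M := by
  have : (fun z : ℝ => if z < M then c else 0) = (Set.Iio M).indicator (fun _ => c) := by
    ext z; simp [Set.indicator_apply]
  rw [this, integral_indicator measurableSet_Iio,
    Measure.restrict_restrict measurableSet_Iio, Set.Iio_inter_Ioi]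
  simp [hM, mul_comm]

lemma sum_integrable (q Z : Ω → ℝ) :
    Integrable (fun z : ℝ => ∑ a ∈ Finset.univ.filter (fun a => z < Z a), q a)
      (volume.restrict (Set.Ioi 0)) := by
  simp only [Finset.sum_filter]
  exact integrable_finsetSum _ fun a _ => ind_integrable _ _

lemma sum_integral (q Z : Ω → ℝ) (hZ : ∀ a, 0 ≤ Z a) :
    ∫ z in Set.Ioi (0:ℝ), ∑ a ∈ Finset.univ.filter (fun a => z < Z a), q a
      = ∑ a, q a * Z a := by
  simp only [Finset.sum_filter]
  rw [integral_finsetSum _ fun a _ => ind_integrable _ _]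
  exact Finset.sum_congr rfl fun a _ => ind_integral _ _ (hZ a)

lemma g_integrable (g : ℝ → ℝ) (hg0 : g 0 = 0) (hgmono : MonotoneOn g (Set.Icc 0 1))
    (hgmap : ∀ s ∈ Set.Icc (0 : ℝ) 1, g s ∈ Set.Icc (0 : ℝ) 1)
    (p : Ω → ℝ) (hp : ∀ a, 0 ≤ p a) (hp1 : ∑ a, p a = 1) (Z : Ω → ℝ) (hZ : ∀ a, 0 ≤ Z a) :
    Integrable (fun z : ℝ => g (∑ a ∈ Finset.univ.filter (fun a => z < Z a), p a))
      (volume.restrict (Set.Ioi 0)) := by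
  have hmem : ∀ A : Finset Ω, ∑ a ∈ A, p a ∈ Set.Icc (0:ℝ) 1 := fun A =>
    ⟨Finset.sum_nonneg fun _ _ => hp _, by
      rw [← hp1]
      exact Finset.sum_le_sum_of_subset_of_nonneg (Finset.subset_univ _) (fun _ _ _ => hp _)⟩
  refine (ind_integrable 1 (∑ a, Z a)).mono' ?_ (Filter.Eventually.of_forall fun z => ?_)
  · refine (Antitone.measurable fun x y hxy => ?_).aestronglyMeasurable
    refine hgmono (hmem _) (hmem _) (Finset.sum_le_sum_of_subset_of_nonneg ?_ fun _ _ _ => hp _)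
    intro a
    simp only [Finset.mem_filter, Finset.mem_univ, true_and]
    exact hxy.trans_lt
  · have h := hgmap _ (hmem (Finset.univ.filter (fun a => z < Z a)))
    rw [Real.norm_eq_abs, abs_of_nonneg h.1]
    split_ifs with hz
    · exact h.2
    · rw [Finset.filter_false_of_mem, Finset.sum_empty, hg0]
      intro a ha h'
      exact hz (h'.trans_le (Finset.single_le_sum (fun b _ => hZ b) ha))

lemma core (g : ℝ → ℝ) (hg0 : g 0 = 0) (hgmono : MonotoneOn g (Set.Icc 0 1))
    (hgconc : ConcaveOn ℝ (Set.Icc 0 1) g)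
    (hgmap : ∀ s ∈ Set.Icc (0 : ℝ) 1, g s ∈ Set.Icc (0 : ℝ) 1)
    (p : Ω → ℝ) (hp : ∀ a, 0 ≤ p a) (hp1 : ∑ a, p a = 1) (Z₁ Z₂ : Ω → ℝ)
    (h₁ : ∀ a, 0 ≤ Z₁ a) (h₂ : ∀ a, 0 ≤ Z₂ a) :
    ∫ z in Set.Ioi (0 : ℝ), g (∑ a ∈ Finset.univ.filter (fun a => z < Z₁ a + Z₂ a), p a) ≤
      (∫ z in Set.Ioi (0 : ℝ), g (∑ a ∈ Finset.univ.filter (fun a => z < Z₁ a), p a)) +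
        ∫ z in Set.Ioi (0 : ℝ), g (∑ a ∈ Finset.univ.filter (fun a => z < Z₂ a), p a) := by
  let f : Ω → Lex (ℝ × Fin (Fintype.card Ω)) :=
    fun a => toLex (-(Z₁ a + Z₂ a), Fintype.equivFin Ω a)
  have hf : Function.Injective f := by
    intro a b h
    have h' := congrArg (fun x => (ofLex x).2) h
    exact (Fintype.equivFin Ω).injective h'
  letI : LinearOrder Ω := LinearOrder.lift' f hf
  have hanti : ∀ a b : Ω, b < a → Z₁ a + Z₂ a ≤ Z₁ b + Z₂ b := by
    intro a b h
    have h' : f b < f a := h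
    rw [Prod.Lex.toLex_lt_toLex] at h'
    rcases h' with h' | h'
    · simp only at h'; linarith
    · have := h'.1; simp only at this; linarith
  have key : ∀ Z : Ω → ℝ, (∀ a, 0 ≤ Z a) → ∑ a, wt g p a * Z a ≤
      ∫ z in Set.Ioi (0 : ℝ), g (∑ a ∈ Finset.univ.filter (fun a => z < Z a), p a) := by
    intro Z hZ
    rw [← sum_integral _ _ hZ]
    exact integral_mono (sum_integrable _ _)
      (g_integrable g hg0 hgmono hgmap p hp hp1 Z hZ)
      fun z => wt_le g hgconc hg0 p hp hp1 _
  have e : ∫ z in Set.Ioi (0 : ℝ), g (∑ a ∈ Finset.univ.filter (fun a => z < Z₁ a + Z₂ a), p a)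
      = ∑ a, wt g p a * (Z₁ a + Z₂ a) := by
    rw [← sum_integral (wt g p) (fun a => Z₁ a + Z₂ a) fun a => add_nonneg (h₁ a) (h₂ a)]
    congr 1
    ext z
    rw [wt_eq g hg0 p]
    intro a ha b hb
    simp only [Finset.mem_filter, Finset.mem_univ, true_and] at ha ⊢
    exact ha.trans_le (hanti a b hb)
  rw [e]
  simp only [mul_add, Finset.sum_add_distrib]
  exact add_le_add (key Z₁ h₁) (key Z₂ h₂)

end integ

end DistSub

/-- On a finite probability space, a distortion risk measure with a
nondecreasing concave distortion function `g : [0,1] → [0,1]`, `g(0) = 0`, is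
subadditive: `ρ_g(Z₁ + Z₂) ≤ ρ_g(Z₁) + ρ_g(Z₂)`. -/
theorem distortion_risk_measure_subadditive
    {Ω : Type*} [Fintype Ω] [MeasurableSpace Ω] [MeasurableSingletonClass Ω]
    (P : Measure Ω) [IsProbabilityMeasure P]
    (g : ℝ → ℝ) (hg0 : g 0 = 0)
    (hgmono : MonotoneOn g (Set.Icc 0 1))
    (hgconc : ConcaveOn ℝ (Set.Icc 0 1) g)
    (hgmap : ∀ s ∈ Set.Icc (0 : ℝ) 1, g s ∈ Set.Icc (0 : ℝ) 1)
    (Z₁ Z₂ : Ω → ℝ) (hZ₁0 : ∀ ω, 0 ≤ Z₁ ω) (hZ₂0 : ∀ ω, 0 ≤ Z₂ ω) :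
    ∫ z in Set.Ioi (0 : ℝ), g ((P {ω | z < Z₁ ω + Z₂ ω}).toReal) ≤
      (∫ z in Set.Ioi (0 : ℝ), g ((P {ω | z < Z₁ ω}).toReal)) +
        ∫ z in Set.Ioi (0 : ℝ), g ((P {ω | z < Z₂ ω}).toReal) := by
  have hP : ∀ (z : ℝ) (Z : Ω → ℝ), (P {ω | z < Z ω}).toReal =
      ∑ a ∈ Finset.univ.filter (fun a => z < Z a), P.real {a} := by
    intro z Z
    rw [sum_measureReal_singleton]
    simp [Measure.real]
  have h1 : ∑ a, P.real {a} = 1 := by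
    rw [sum_measureReal_singleton]
    simp
  have := DistSub.core g hg0 hgmono hgconc hgmap (fun a => P.real {a})
    (fun a => measureReal_nonneg) h1 Z₁ Z₂ hZ₁0 hZ₂0
  simp only [hP _ Z₁, hP _ Z₂, hP _ (fun ω => Z₁ ω + Z₂ ω)]
  exact this
end

section
/- Let (Ω, P) be a finite probability space and let g : [0,1] → [0,1] be a nondecreasing concave function with g(0) = 0 and g(1) = 1. If Z₁ and Z₂ are nonnegative random variables on Ω such that E[φ(Z₁)] ≤ E[φ(Z₂)] for every convex function φ : ℝ → ℝ (i.e., Z₂ dominates Z₁ in the convex order, so Z₂ is a mean-preserving spread of Z₁), then ρ_g(Z₁) ≤ ρ_g(Z₂); that is, distortion risk measures with concave distortion functions are averse to mean-preserving spreads. -/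
open MeasureTheory

lemma aux_supergrad (g : ℝ → ℝ) (hgmono : MonotoneOn g (Set.Icc 0 1))
    (hgconc : ConcaveOn ℝ (Set.Icc 0 1) g) (s : ℝ) :
    ∃ c : ℝ, s ∈ Set.Ioc (0 : ℝ) 1 → ∀ t ∈ Set.Icc (0 : ℝ) 1, g t ≤ g s + c * (t - s) := by
  by_cases h1 : s ∈ Set.Ioo (0 : ℝ) 1
  · have hc := hgconc.neg
    have hi : s ∈ interior (Set.Icc (0 : ℝ) 1) := by rwa [interior_Icc]
    refine ⟨- derivWithin (-g) (Set.Ioi s) s, fun _ t ht => ?_⟩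
    have hlr := hc.leftDeriv_le_rightDeriv_of_mem_interior hi
    rcases lt_trichotomy t s with hlt | rfl | hlt
    · have h2 := hc.slope_le_leftDeriv_of_mem_interior ht hi hlt
      have h3 := h2.trans hlr
      rw [slope_def_field, div_le_iff₀ (sub_pos.2 hlt)] at h3
      simp only [Pi.neg_apply] at h3
      linarith
    · simp
    · have h3 := hc.rightDeriv_le_slope_of_mem_interior hi ht hlt
      rw [slope_def_field, le_div_iff₀ (sub_pos.2 hlt)] at h3
      simp only [Pi.neg_apply] at h3
      linarith
  · refine ⟨0, fun hs t ht => ?_⟩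
    have : s = 1 := by
      by_contra h
      exact h1 ⟨hs.1, lt_of_le_of_ne hs.2 h⟩
    subst this
    have := hgmono ht (by simp) ht.2
    linarith

lemma aux_tangent (h : ℝ → ℝ) (hh : Monotone h) (x y : ℝ) :
    h x * (y - x) ≤ (∫ z in (0 : ℝ)..y, h z) - ∫ z in (0 : ℝ)..x, h z := by
  rw [intervalIntegral.integral_interval_sub_left hh.intervalIntegrable hh.intervalIntegrable]
  rcases le_total x y with hxy | hxy
  · have := intervalIntegral.integral_mono_on (μ := volume) hxy
      (intervalIntegrable_const (c := h x)) hh.intervalIntegrable (fun z hz => hh hz.1)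
    rw [intervalIntegral.integral_const, smul_eq_mul] at this
    linarith
  · have := intervalIntegral.integral_mono_on (μ := volume) hxy hh.intervalIntegrable
      (intervalIntegrable_const (c := h x)) (fun z hz => hh hz.2)
    rw [intervalIntegral.integral_const, smul_eq_mul] at this
    rw [intervalIntegral.integral_symm]
    linarith

lemma aux_convex (h : ℝ → ℝ) (hh : Monotone h) :
    ConvexOn ℝ Set.univ (fun x => ∫ z in (0 : ℝ)..x, h z) := by
  refine ⟨convex_univ, fun x _ y _ a b ha hb hab => ?_⟩
  simp only [smul_eq_mul]
  have h1 := aux_tangent h hh (a * x + b * y) x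
  have h2 := aux_tangent h hh (a * x + b * y) y
  have h3 := mul_le_mul_of_nonneg_left h1 ha
  have h4 := mul_le_mul_of_nonneg_left h2 hb
  generalize (∫ z in (0 : ℝ)..(a * x + b * y), h z) = u at *
  generalize h (a * x + b * y) = w at *
  obtain rfl : b = 1 - a := by linarith
  nlinarith

section
variable {Ω : Type*} [Fintype Ω] [MeasurableSpace Ω] [MeasurableSingletonClass Ω]
    (P : Measure Ω) [IsProbabilityMeasure P]

lemma aux_surv (Z : Ω → ℝ) (z : ℝ) :
    (P {ω | z < Z ω}).toReal = ∑ ω, P.real {ω} * (Set.Iio (Z ω)).indicator 1 z := by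
  have h := integral_indicator_one (μ := P) (s := {ω | z < Z ω}) (Set.toFinite _).measurableSet
  rw [integral_fintype Integrable.of_finite] at h
  change P.real _ = _
  rw [← h]
  refine Finset.sum_congr rfl fun ω _ => ?_
  simp [Set.indicator_apply]

lemma aux_int (h : ℝ → ℝ) (hh : Monotone h) (Z : Ω → ℝ) (hZ : ∀ ω, 0 ≤ Z ω) :
    IntegrableOn (fun z => h z * (P {ω | z < Z ω}).toReal) (Set.Ioi 0) ∧
    ∫ z in Set.Ioi (0 : ℝ), h z * (P {ω | z < Z ω}).toReal
      = ∫ ω, (∫ z in (0 : ℝ)..(Z ω), h z) ∂P := by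
  have he : (fun z => h z * (P {ω | z < Z ω}).toReal) =
      fun z => ∑ ω, P.real {ω} * (Set.Iio (Z ω)).indicator h z := by
    funext z
    rw [aux_surv, Finset.mul_sum]
    refine Finset.sum_congr rfl fun ω _ => ?_
    simp only [Set.indicator_apply, Pi.one_apply]
    split_ifs <;> ring
  have hset : ∀ c : ℝ, Set.Iio c ∩ Set.Ioi 0 = Set.Ioo 0 c := by
    intro c; ext; simp [and_comm]
  have hi : ∀ ω, IntegrableOn ((Set.Iio (Z ω)).indicator h) (Set.Ioi 0) := by
    intro ω
    rw [IntegrableOn, integrable_indicator_iff measurableSet_Iio, IntegrableOn,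
      Measure.restrict_restrict measurableSet_Iio, hset]
    have := (intervalIntegrable_iff_integrableOn_Ioo_of_le (hZ ω)).1
      (hh.intervalIntegrable (μ := volume))
    exact this
  rw [he]
  refine ⟨integrable_finsetSum _ fun ω _ => (hi ω).const_mul _, ?_⟩
  rw [integral_finsetSum _ fun ω _ => (hi ω).const_mul _, integral_fintype Integrable.of_finite]
  refine Finset.sum_congr rfl fun ω _ => ?_
  rw [integral_const_mul, integral_indicator measurableSet_Iio,
    Measure.restrict_restrict measurableSet_Iio, hset, smul_eq_mul,
    intervalIntegral.integral_of_le (hZ ω), integral_Ioc_eq_integral_Ioo]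

lemma aux_anti (Z : Ω → ℝ) : Antitone fun z => (P {ω | z < Z ω}).toReal := by
  intro x y hxy
  exact ENNReal.toReal_mono (measure_ne_top _ _)
    (measure_mono fun ω hω => lt_of_le_of_lt hxy hω)

lemma aux_mem (A : Set Ω) : (P A).toReal ∈ Set.Icc (0 : ℝ) 1 :=
  ⟨ENNReal.toReal_nonneg, measureReal_le_one⟩

lemma aux_gint (g : ℝ → ℝ) (hg0 : g 0 = 0) (hgmono : MonotoneOn g (Set.Icc 0 1)) (Z : Ω → ℝ) :
    IntegrableOn (fun z => g (P {ω | z < Z ω}).toReal) (Set.Ioi 0) := by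
  obtain ⟨B, hB⟩ := (Set.finite_range Z).bddAbove
  have ha : Antitone (fun z => g (P {ω | z < Z ω}).toReal) := fun x y hxy =>
    hgmono (aux_mem P _) (aux_mem P _) (aux_anti P Z hxy)
  have h1 : IntegrableOn (fun z => g (P {ω | z < Z ω}).toReal) (Set.Icc 0 B) :=
    (ha.antitoneOn _).integrableOn_isCompact isCompact_Icc
  refine h1.of_forall_diff_eq_zero measurableSet_Ioi ?_
  intro z hz
  have hzB : B < z := by
    by_contra hc
    exact hz.2 ⟨le_of_lt hz.1, not_lt.1 hc⟩
  have : {ω | z < Z ω} = ∅ := by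
    ext ω
    have := hB ⟨ω, rfl⟩
    simp only [Set.mem_setOf_eq, Set.mem_empty_iff_false, iff_false]
    linarith
  simp [this, hg0]

lemma aux_zero (Z₁ Z₂ : Ω → ℝ)
    (hcx : ∀ φ : ℝ → ℝ, ConvexOn ℝ Set.univ φ →
      ∫ ω, φ (Z₁ ω) ∂P ≤ ∫ ω, φ (Z₂ ω) ∂P) (z : ℝ) (hz : (P {ω | z < Z₂ ω}).toReal = 0) :
    (P {ω | z < Z₁ ω}).toReal = 0 := by
  have hconv : ConvexOn ℝ Set.univ (fun x : ℝ => max (x - z) 0) := by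
    refine ConvexOn.sup ((convexOn_id convex_univ).sub (concaveOn_const z convex_univ))
      (convexOn_const 0 convex_univ)
  have h := hcx _ hconv
  have hz' : P {ω | z < Z₂ ω} = 0 := by
    simpa [ENNReal.toReal_eq_zero_iff] using hz
  have h2 : ∫ ω, max (Z₂ ω - z) 0 ∂P = 0 := by
    refine integral_eq_zero_of_ae ?_
    have : ∀ᵐ ω ∂P, ¬ z < Z₂ ω := by
      rw [ae_iff]; simpa using hz'
    filter_upwards [this] with ω hω
    simp only [Pi.zero_apply]
    exact max_eq_right (by linarith)
  have h1 : ∫ ω, max (Z₁ ω - z) 0 ∂P = 0 :=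
    le_antisymm (h.trans h2.le) (integral_nonneg fun ω => le_max_right _ _)
  rw [integral_eq_zero_iff_of_nonneg (f := fun ω => max (Z₁ ω - z) 0) (fun ω => le_max_right _ _)
    Integrable.of_finite] at h1
  have : ∀ᵐ ω ∂P, ¬ z < Z₁ ω := by
    filter_upwards [h1] with ω hω hlt
    have := le_max_left (Z₁ ω - z) 0
    simp only [Pi.zero_apply] at hω
    linarith
  rw [ae_iff] at this
  simp only [not_not] at this
  simp [this]

end

/-- On a finite probability space, a distortion risk measure with a
nondecreasing concave distortion function `g : [0,1] → [0,1]`, `g(0) = 0`, `g(1) = 1`,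
is monotone with respect to the convex order (aversion to mean-preserving spreads):
if `E[φ(Z₁)] ≤ E[φ(Z₂)]` for every convex `φ : ℝ → ℝ`, then `ρ_g(Z₁) ≤ ρ_g(Z₂)`. -/
theorem distortion_risk_measure_convex_order_monotone
    {Ω : Type*} [Fintype Ω] [MeasurableSpace Ω] [MeasurableSingletonClass Ω]
    (P : Measure Ω) [IsProbabilityMeasure P]
    (g : ℝ → ℝ) (hg0 : g 0 = 0) (hg1 : g 1 = 1)
    (hgmono : MonotoneOn g (Set.Icc 0 1))
    (hgconc : ConcaveOn ℝ (Set.Icc 0 1) g)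
    (hgmap : ∀ s ∈ Set.Icc (0 : ℝ) 1, g s ∈ Set.Icc (0 : ℝ) 1)
    (Z₁ Z₂ : Ω → ℝ) (hZ₁0 : ∀ ω, 0 ≤ Z₁ ω) (hZ₂0 : ∀ ω, 0 ≤ Z₂ ω)
    -- `Z₂` dominates `Z₁` in the convex order
    (hcx : ∀ φ : ℝ → ℝ, ConvexOn ℝ Set.univ φ →
      ∫ ω, φ (Z₁ ω) ∂P ≤ ∫ ω, φ (Z₂ ω) ∂P) :
    ∫ z in Set.Ioi (0 : ℝ), g ((P {ω | z < Z₁ ω}).toReal) ≤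
      ∫ z in Set.Ioi (0 : ℝ), g ((P {ω | z < Z₂ ω}).toReal) := by
  choose G hG using aux_supergrad g hgmono hgconc
  -- a positive lower bound for the nonzero survival probabilities
  obtain ⟨s, hs0, hs1, hs⟩ : ∃ s : ℝ, 0 < s ∧ s ≤ 1 ∧
      ∀ A : Set Ω, (P A).toReal ≠ 0 → s ≤ (P A).toReal := by
    obtain ⟨A, hA, hmin⟩ := Set.exists_min_image {A : Set Ω | (P A).toReal ≠ 0}
      (fun A => (P A).toReal) (Set.toFinite _) ⟨Set.univ, by simp⟩
    exact ⟨(P A).toReal, lt_of_le_of_ne ENNReal.toReal_nonneg (Ne.symm hA), (aux_mem P A).2, hmin⟩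
  set h : ℝ → ℝ := fun z => G (max (P {ω | z < Z₂ ω}).toReal s) with hh
  have hmem : ∀ z, max (P {ω | z < Z₂ ω}).toReal s ∈ Set.Ioc (0 : ℝ) 1 := fun z =>
    ⟨lt_max_of_lt_right hs0, max_le (aux_mem P _).2 hs1⟩
  have hGanti : ∀ a ∈ Set.Ioc (0 : ℝ) 1, ∀ b ∈ Set.Ioc (0 : ℝ) 1, a ≤ b → G b ≤ G a := by
    intro a ha b hb hab
    rcases hab.eq_or_lt with rfl | hlt
    · exact le_rfl
    have h1 := hG a ha b ⟨hb.1.le, hb.2⟩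
    have h2 := hG b hb a ⟨ha.1.le, ha.2⟩
    by_contra hc
    nlinarith [mul_pos (sub_pos.2 (not_le.1 hc)) (sub_pos.2 hlt)]
  have hmono : Monotone h := fun x y hxy =>
    hGanti _ (hmem y) _ (hmem x) (max_le_max_right _ (aux_anti P Z₂ hxy))
  have hpt : ∀ z, g (P {ω | z < Z₁ ω}).toReal + h z * (P {ω | z < Z₂ ω}).toReal ≤
      g (P {ω | z < Z₂ ω}).toReal + h z * (P {ω | z < Z₁ ω}).toReal := by
    intro z
    by_cases hz : (P {ω | z < Z₂ ω}).toReal = 0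
    · rw [hz, aux_zero P Z₁ Z₂ hcx z hz]
    · have hm : max (P {ω | z < Z₂ ω}).toReal s = (P {ω | z < Z₂ ω}).toReal :=
        max_eq_left (hs _ hz)
      have h1 := hG _ (hmem z) _ (aux_mem P {ω | z < Z₁ ω})
      have h2 : h z = G (P {ω | z < Z₂ ω}).toReal := by rw [hh]; simp only [hm]
      rw [hm, ← h2] at h1
      linarith
  obtain ⟨i1, e1⟩ := aux_int P h hmono Z₁ hZ₁0
  obtain ⟨i2, e2⟩ := aux_int P h hmono Z₂ hZ₂0
  have j1 := aux_gint P g hg0 hgmono Z₁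
  have j2 := aux_gint P g hg0 hgmono Z₂
  have key := integral_mono (j1.add i2) (j2.add i1) hpt
  have a1 := integral_add j1 i2
  have a2 := integral_add j2 i1
  have hc := hcx _ (aux_convex h hmono)
  rw [← e1, ← e2] at hc
  simp only [Pi.add_apply] at key
  linarith
end
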